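/- Let a > 0, γ ∈ (0,1], M > 0, σ_max > 0, N > 0, λ > 0, β ∈ (0,1], θ_max > 0, δ ∈ [0,1], p_f ∈ [0, β θ_max], and p_a with aγ e^{−γσ_max} ≤ p_a ≤ aγ. Set φ_a = p_f/(β θ_max), φ_f = 1 − φ_a, σ_T = (1/γ) ln(aγ/p_a), m*(σ) = N φ_a (ln(aγ/p_a) − γσ) for σ ≤ σ_T and m*(σ) = 0 for σ > σ_T, and Q = M ∫_0^{σ_max} (1/σ_max) m*(σ) dσ. Then the sum of (i) the ad platform's revenue δ p_a Q, (ii) the venue owner's revenue (1−δ) p_a Q + λ p_f N φ_f, (iii) the mobile users' total payoff λ N ( ∫_0^{p_f/β} (1−β)(θ/θ_max) dθ + ∫_{p_f/β}^{θ_max} ((θ − p_f)/θ_max) dθ ), and (iv) the advertisers' total payoff M ∫_0^{σ_max} (1/σ_max) ( a N φ_a γ e^{−γσ} (1 − e^{−m*(σ)/(N φ_a)}) − p_a m*(σ) ) dσ, equals (1/2) λ N θ_max − (1/2) λ N p_f φ_a + (M/σ_max) N φ_a ( a − (p_a/γ)(1 + ln(aγ/p_a)) ). -/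

import Mathlib

/-!
The advertisers' payments `p_a Q` and the premium fees `λ p_f N φ_f` are pure transfers, so only the
utilities remain. The demand is `m*(σ) = N φ_a · max (ln(aγ/p_a) − γσ, 0)`, which is continuous, so
the advertisers' payoff splits into gross utility minus payment. The gross utility is
`a N φ_a / σ_max` times `∫ γ e^{−γσ} (1 − e^{−max(L − γσ, 0)}) dσ` with `L = ln(aγ/p_a)`; its
integrand vanishes beyond `σ_T = L/γ`, and equals `γ e^{−γσ} − γ e^{−L}` before it, whence the value
`1 − e^{−L}(1 + L)` (`integral_gross`). The users' part is a pair of polynomial integrals.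
-/

/-- Normalised gross utility of the advertisers; the bound `L ≤ γ s` says that the marginal
advertiser type `L / γ` lies within the range `[0, s]` of types. -/
lemma integral_gross (γ L s : ℝ) (hγ : 0 < γ) (hL : 0 ≤ L) (hs : L ≤ γ * s) :
    ∫ σ in (0 : ℝ)..s, γ * Real.exp (-(γ * σ)) * (1 - Real.exp (-(max (L - γ * σ) 0)))
      = 1 - Real.exp (-L) * (1 + L) := by
  have hT0 : 0 ≤ L / γ := by positivity
  have hTs : L / γ ≤ s := by rw [div_le_iff₀ hγ]; linarith
  have hc : Continuous fun σ : ℝ =>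
      γ * Real.exp (-(γ * σ)) * (1 - Real.exp (-(max (L - γ * σ) 0))) := by fun_prop
  rw [← intervalIntegral.integral_add_adjacent_intervals
    (hc.intervalIntegrable 0 (L / γ)) (hc.intervalIntegrable (L / γ) s)]
  have h2 : ∫ σ in (L / γ)..s,
      γ * Real.exp (-(γ * σ)) * (1 - Real.exp (-(max (L - γ * σ) 0))) = ∫ σ in (L / γ)..s, 0 := by
    apply intervalIntegral.integral_congr
    intro σ hσ
    rw [Set.uIcc_of_le hTs] at hσ
    have h := (div_le_iff₀ hγ).1 hσ.1
    simp only
    rw [max_eq_right (by linarith)]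
    simp
  have h1 : ∫ σ in (0 : ℝ)..(L / γ),
      γ * Real.exp (-(γ * σ)) * (1 - Real.exp (-(max (L - γ * σ) 0)))
      = ∫ σ in (0 : ℝ)..(L / γ), (γ * Real.exp (-(γ * σ)) - γ * Real.exp (-L)) := by
    apply intervalIntegral.integral_congr
    intro σ hσ
    rw [Set.uIcc_of_le hT0] at hσ
    have h := (le_div_iff₀ hγ).1 hσ.2
    simp only
    rw [max_eq_left (by linarith), mul_sub, mul_assoc γ, mul_assoc γ, ← Real.exp_add]
    ring_nf
  have h3 : ∫ σ in (0 : ℝ)..(L / γ), (γ * Real.exp (-(γ * σ)) - γ * Real.exp (-L))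
      = (-Real.exp (-(γ * (L / γ))) - γ * Real.exp (-L) * (L / γ))
        - (-Real.exp (-(γ * 0)) - γ * Real.exp (-L) * 0) := by
    apply intervalIntegral.integral_eq_sub_of_hasDerivAt
      (f := fun σ => -Real.exp (-(γ * σ)) - γ * Real.exp (-L) * σ)
    · intro x _
      have e1 : HasDerivAt (fun σ : ℝ => -(γ * σ)) (-(γ * 1)) x :=
        ((hasDerivAt_id x).const_mul γ).neg
      have e2 := e1.exp.neg.sub ((hasDerivAt_id x).const_mul (γ * Real.exp (-L)))
      exact e2.congr_deriv (by ring)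
    · exact Continuous.intervalIntegrable (by fun_prop) _ _
  rw [h1, h2, h3, mul_div_cancel₀ L hγ.ne']
  have h4 : γ * Real.exp (-L) * (L / γ) = Real.exp (-L) * L := by field_simp
  rw [h4]
  simp
  ring

theorem stmt13 (a γ M σmax N lam β θmax δ pf pa : ℝ)
    (ha : 0 < a) (hγ : γ ∈ Set.Ioc (0 : ℝ) 1) (hM : 0 < M) (hσ : 0 < σmax)
    (hN : 0 < N) (hlam : 0 < lam) (hβ : β ∈ Set.Ioc (0 : ℝ) 1) (hθ : 0 < θmax)
    (hδ : δ ∈ Set.Icc (0 : ℝ) 1) (hpf : pf ∈ Set.Icc 0 (β * θmax))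
    (hpa1 : a * γ * Real.exp (-(γ * σmax)) ≤ pa) (hpa2 : pa ≤ a * γ) :
    let φa : ℝ := pf / (β * θmax)
    let φf : ℝ := 1 - φa
    let σT : ℝ := (1 / γ) * Real.log (a * γ / pa)
    let mStar : ℝ → ℝ := fun σ =>
      if σ ≤ σT then N * φa * (Real.log (a * γ / pa) - γ * σ) else 0
    let Q : ℝ := M * ∫ σ in (0 : ℝ)..σmax, (1 / σmax) * mStar σ
    δ * pa * Q
      + ((1 - δ) * pa * Q + lam * pf * N * φf)
      + lam * N * ((∫ θ in (0 : ℝ)..(pf / β), (1 - β) * (θ / θmax)) +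
          ∫ θ in (pf / β)..θmax, (θ - pf) / θmax)
      + M * ∫ σ in (0 : ℝ)..σmax, (1 / σmax) *
          (a * N * φa * (γ * Real.exp (-(γ * σ))) * (1 - Real.exp (-(mStar σ / (N * φa))))
            - pa * mStar σ) =
      1 / 2 * lam * N * θmax - 1 / 2 * lam * N * pf * φa
        + (M / σmax) * N * φa * (a - (pa / γ) * (1 + Real.log (a * γ / pa))) := by
  intro φa φf σT mStar Q
  obtain ⟨hγ0, -⟩ := hγ
  obtain ⟨hβ0, -⟩ := hβ
  have hag : 0 < a * γ := mul_pos ha hγ0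
  have hpa : 0 < pa := lt_of_lt_of_le (by positivity) hpa1
  set L := Real.log (a * γ / pa) with hLdef
  have hL0 : 0 ≤ L := Real.log_nonneg ((one_le_div hpa).2 hpa2)
  have hLs : L ≤ γ * σmax := by
    rw [hLdef, Real.log_le_iff_le_exp (by positivity), div_le_iff₀ hpa]
    have h := mul_le_mul_of_nonneg_left hpa1 (Real.exp_pos (γ * σmax)).le
    have h' : Real.exp (γ * σmax) * Real.exp (-(γ * σmax)) = 1 := by
      rw [← Real.exp_add]; simp
    calc a * γ = Real.exp (γ * σmax) * (a * γ * Real.exp (-(γ * σmax))) := by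
          linear_combination (-(a * γ)) * h'
      _ ≤ _ := h
  have hexpL : Real.exp (-L) = pa / (a * γ) := by
    rw [Real.exp_neg, hLdef, Real.exp_log (by positivity), inv_div]
  have hm : ∀ σ, mStar σ = N * φa * max (L - γ * σ) 0 := by
    intro σ
    have hiff : σ ≤ σT ↔ γ * σ ≤ L := by
      change σ ≤ 1 / γ * L ↔ _
      rw [one_div_mul_eq_div, le_div_iff₀ hγ0, mul_comm]
    change (if σ ≤ σT then N * φa * (L - γ * σ) else 0) = _
    split_ifs with h
    · rw [max_eq_left (by linarith [hiff.1 h])]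
    · rw [max_eq_right (by linarith [not_le.1 (mt hiff.2 h)]), mul_zero]
  have hmc : Continuous mStar := by
    rw [show mStar = fun σ => N * φa * max (L - γ * σ) 0 from funext hm]
    fun_prop
  -- For `φa = 0` the quotient `mStar σ / (N * φa)` is a junk `0`, but the prefactor vanishes.
  have hpt : ∀ σ, (1 / σmax) *
      (a * N * φa * (γ * Real.exp (-(γ * σ))) * (1 - Real.exp (-(mStar σ / (N * φa))))
        - pa * mStar σ)
      = (1 / σmax * (a * N * φa)) *
          (γ * Real.exp (-(γ * σ)) * (1 - Real.exp (-(max (L - γ * σ) 0))))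
        - pa * (1 / σmax * mStar σ) := by
    intro σ
    by_cases h0 : φa = 0
    · simp [hm, h0]
    · have : mStar σ / (N * φa) = max (L - γ * σ) 0 := by
        rw [hm, mul_div_cancel_left₀ _ (mul_ne_zero hN.ne' h0)]
      rw [this]; ring
  have hadv : ∫ σ in (0 : ℝ)..σmax, (1 / σmax) *
      (a * N * φa * (γ * Real.exp (-(γ * σ))) * (1 - Real.exp (-(mStar σ / (N * φa))))
        - pa * mStar σ)
      = (1 / σmax * (a * N * φa)) * (1 - Real.exp (-L) * (1 + L))
        - pa * ∫ σ in (0 : ℝ)..σmax, (1 / σmax) * mStar σ := by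
    simp_rw [hpt]
    rw [intervalIntegral.integral_sub
      (Continuous.intervalIntegrable (by fun_prop) _ _)
      (Continuous.intervalIntegrable (by fun_prop) _ _),
      intervalIntegral.integral_const_mul, intervalIntegral.integral_const_mul,
      integral_gross γ L σmax hγ0 hL0 hLs]
  have hu1 : ∫ θ in (0 : ℝ)..(pf / β), (1 - β) * (θ / θmax)
      = (1 - β) * ((pf / β) ^ 2 / 2 / θmax) := by
    rw [intervalIntegral.integral_const_mul, intervalIntegral.integral_div, integral_id]
    ring
  have hu2 : ∫ θ in (pf / β)..θmax, (θ - pf) / θmax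
      = ((θmax ^ 2 - (pf / β) ^ 2) / 2 - (θmax - pf / β) * pf) / θmax := by
    rw [intervalIntegral.integral_div, intervalIntegral.integral_sub
      (Continuous.intervalIntegrable (by fun_prop) _ _)
      (Continuous.intervalIntegrable (by fun_prop) _ _), integral_id,
      intervalIntegral.integral_const, smul_eq_mul]
  rw [hadv, hu1, hu2, hexpL]
  simp only [Q, φf]
  generalize (∫ σ in (0 : ℝ)..σmax, (1 / σmax) * mStar σ) = J
  simp only [φa]
  clear_value L
  field_simp
  ring
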